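/- Let A = Σ_{e=1}^N L_e^T·A_e·L_e be an assembled finite element matrix where each element matrix A_e ∈ ℝ^{m×m} is symmetric positive definite. Then A is symmetric positive definite and its spectral condition number satisfies 1 ≤ κ(A) ≤ p_max · (max_e λ_max(A_e)) / (min_e λ_min(A_e)). -/

import Mathlib

open Matrix

/-- The eigenvalues of a symmetric real matrix listed in ascending order with multiplicity. -/
noncomputable def sortedEigs {n : ℕ} (M : Matrix (Fin n) (Fin n) ℝ) : Fin n → ℝ :=
  if h : M.IsHermitian then h.eigenvalues ∘ Tuple.sort h.eigenvalues else 0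

/-- The smallest and largest eigenvalues of a symmetric matrix. -/
noncomputable def lamMin {n : ℕ} (M : Matrix (Fin (n+1)) (Fin (n+1)) ℝ) : ℝ := sortedEigs M 0
noncomputable def lamMax {n : ℕ} (M : Matrix (Fin (n+1)) (Fin (n+1)) ℝ) : ℝ :=
  sortedEigs M (Fin.last n)

/-- The spectral condition number `κ(A) = λ_max(A)/λ_min(A)`. -/
noncomputable def specCond {n : ℕ} (M : Matrix (Fin (n+1)) (Fin (n+1)) ℝ) : ℝ :=
  lamMax M / lamMin M

/-- The Boolean connectivity matrix `L_e` of an element whose local-to-global map is `σ`: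
its rows are the standard basis vectors of `ℝ^n` selected by `σ`. -/
def elemL {ι : Type*} {n : ℕ} (σ : ι → Fin n) : Matrix ι (Fin n) ℝ :=
  Matrix.of fun i j => if σ i = j then 1 else 0

/-! The Loewner order turns the eigenvalue bounds `λ_min(A_e) ≥ a` and `λ_max(A_e) ≤ b` into
`a • 1 ≤ A_e ≤ b • 1`. Congruence by `L_e` and summation over `e` give
`a • Σ L_eᵀ L_e ≤ A ≤ b • Σ L_eᵀ L_e`. When the rows of each `L_e` are distinct standard
basis vectors, the matrix `Σ L_eᵀ L_e` is diagonal, its `i`-th entry being the number of elements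
that contain the index `i`, so it lies between `1` and `p_max • 1`. -/

section Loewner

open scoped MatrixOrder ComplexOrder

variable {𝕜 E m n : Type*} [RCLike 𝕜]

lemma conjTranspose_mul_mul_mono [Fintype m] [Finite n] {A B : Matrix m m 𝕜} (hAB : A ≤ B)
    (L : Matrix m n 𝕜) : Lᴴ * A * L ≤ Lᴴ * B * L := by
  rw [Matrix.le_iff, ← Matrix.sub_mul, ← Matrix.mul_sub]
  exact (Matrix.le_iff.1 hAB).conjTranspose_mul_mul_same L

lemma diagonal_mono [DecidableEq n] {d d' : n → 𝕜} (h : d ≤ d') :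
    diagonal d ≤ diagonal d' := by
  rw [Matrix.le_iff, diagonal_sub, posSemidef_diagonal_iff]
  exact fun i => sub_nonneg.2 (h i)

lemma posDef_of_smul_one_le [DecidableEq n] {A : Matrix n n 𝕜} {a : ℝ} (ha : 0 < a)
    (h : a • 1 ≤ A) : A.PosDef := by
  simpa using (PosDef.one.smul ha).add_posSemidef (Matrix.le_iff.1 h)

variable [Finite n] [Fintype E] {ι : E → Type*} [∀ e, Fintype (ι e)] [∀ e, DecidableEq (ι e)]
  {A : ∀ e, Matrix (ι e) (ι e) 𝕜}

lemma smul_sum_conjTranspose_mul_self_le {a : ℝ} (hA : ∀ e, a • 1 ≤ A e)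
    (L : ∀ e, Matrix (ι e) n 𝕜) :
    a • ∑ e, (L e)ᴴ * L e ≤ ∑ e, (L e)ᴴ * A e * L e := by
  rw [Finset.smul_sum]
  exact Finset.sum_le_sum fun e _ => by simpa using conjTranspose_mul_mul_mono (hA e) (L e)

lemma sum_conjTranspose_mul_mul_le_smul {b : ℝ} (hA : ∀ e, A e ≤ b • 1)
    (L : ∀ e, Matrix (ι e) n 𝕜) :
    ∑ e, (L e)ᴴ * A e * L e ≤ b • ∑ e, (L e)ᴴ * L e := by
  rw [Finset.smul_sum]
  exact Finset.sum_le_sum fun e _ => by simpa using conjTranspose_mul_mul_mono (hA e) (L e)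

variable [DecidableEq n] {L : ∀ e, Matrix (ι e) n 𝕜}

lemma smul_one_le_sum_conjTranspose_mul_mul {a c : ℝ} (ha : 0 ≤ a) (hA : ∀ e, a • 1 ≤ A e)
    (hL : c • 1 ≤ ∑ e, (L e)ᴴ * L e) :
    (c * a) • 1 ≤ ∑ e, (L e)ᴴ * A e * L e := by
  cases nonempty_fintype n
  calc (c * a) • (1 : Matrix n n 𝕜) = a • c • 1 := by rw [mul_comm, mul_smul]
    _ ≤ a • ∑ e, (L e)ᴴ * L e := smul_le_smul_of_nonneg_left hL ha
    _ ≤ ∑ e, (L e)ᴴ * A e * L e := smul_sum_conjTranspose_mul_self_le hA L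

lemma sum_conjTranspose_mul_mul_le_smul_one {b d : ℝ} (hb : 0 ≤ b) (hA : ∀ e, A e ≤ b • 1)
    (hL : ∑ e, (L e)ᴴ * L e ≤ d • 1) :
    ∑ e, (L e)ᴴ * A e * L e ≤ (d * b) • 1 := by
  cases nonempty_fintype n
  calc ∑ e, (L e)ᴴ * A e * L e ≤ b • ∑ e, (L e)ᴴ * L e := sum_conjTranspose_mul_mul_le_smul hA L
    _ ≤ b • d • 1 := smul_le_smul_of_nonneg_left hL hb
    _ = (d * b) • 1 := by rw [mul_comm, mul_smul]

end Loewner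

section ExtremeEigenvalues

open scoped MatrixOrder

lemma range_sortedEigs {n : ℕ} {M : Matrix (Fin n) (Fin n) ℝ} (hM : M.IsHermitian) :
    Set.range (sortedEigs M) = spectrum ℝ M := by
  rw [sortedEigs, dif_pos hM, EquivLike.range_comp, hM.spectrum_real_eq_range_eigenvalues]

lemma sortedEigs_monotone {n : ℕ} (M : Matrix (Fin n) (Fin n) ℝ) : Monotone (sortedEigs M) := by
  rw [sortedEigs]
  split_ifs with hM
  · exact Tuple.monotone_sort hM.eigenvalues
  · exact monotone_const

variable {n : ℕ} {M : Matrix (Fin (n + 1)) (Fin (n + 1)) ℝ}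

lemma isLeast_lamMin (hM : M.IsHermitian) : IsLeast (spectrum ℝ M) (lamMin M) := by
  rw [← range_sortedEigs hM, ← Set.image_univ]
  exact (sortedEigs_monotone M).map_isLeast isLeast_univ

lemma isGreatest_lamMax (hM : M.IsHermitian) : IsGreatest (spectrum ℝ M) (lamMax M) := by
  rw [← range_sortedEigs hM, ← Set.image_univ]
  exact (sortedEigs_monotone M).map_isGreatest isGreatest_univ

lemma lamMin_le_lamMax (M : Matrix (Fin (n + 1)) (Fin (n + 1)) ℝ) : lamMin M ≤ lamMax M :=
  sortedEigs_monotone M (Fin.zero_le _)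

lemma smul_one_le_iff_le_lamMin (hM : M.IsHermitian) {a : ℝ} : a • 1 ≤ M ↔ a ≤ lamMin M := by
  rw [← Algebra.algebraMap_eq_smul_one, algebraMap_le_iff_le_spectrum hM.isSelfAdjoint]
  exact le_isGLB_iff (isLeast_lamMin hM).isGLB |>.symm

lemma le_smul_one_iff_lamMax_le (hM : M.IsHermitian) {b : ℝ} : M ≤ b • 1 ↔ lamMax M ≤ b := by
  rw [← Algebra.algebraMap_eq_smul_one, le_algebraMap_iff_spectrum_le hM.isSelfAdjoint]
  exact isLUB_le_iff (isGreatest_lamMax hM).isLUB |>.symm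

lemma lamMin_pos (hM : M.PosDef) : 0 < lamMin M :=
  hM.isStrictlyPositive.spectrum_pos (isLeast_lamMin hM.isHermitian).1

lemma one_le_specCond (hM : M.PosDef) : 1 ≤ specCond M :=
  (one_le_div (lamMin_pos hM)).2 (lamMin_le_lamMax M)

lemma specCond_le_div (hM : M.IsHermitian) {a b : ℝ} (ha : 0 < a) (haM : a • 1 ≤ M)
    (hMb : M ≤ b • 1) : specCond M ≤ b / a := by
  have hmin : a ≤ lamMin M := (smul_one_le_iff_le_lamMin hM).1 haM
  have hmax : lamMax M ≤ b := (le_smul_one_iff_lamMax_le hM).1 hMb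
  have hb : 0 ≤ b := ha.le.trans (hmin.trans ((lamMin_le_lamMax M).trans hmax))
  exact div_le_div₀ hb hmax ha hmin

end ExtremeEigenvalues

section Connectivity

open scoped MatrixOrder

lemma transpose_elemL_mul_elemL {ι : Type*} [Fintype ι] {n : ℕ} (σ : ι → Fin n) :
    (elemL σ)ᵀ * elemL σ = diagonal fun i => (Finset.card {j | σ j = i} : ℝ) := by
  ext i k
  rcases eq_or_ne i k with rfl | hik
  · simp [elemL, mul_apply, ← ite_and]
  · simp only [elemL, mul_apply, transpose_apply, of_apply, diagonal_apply_ne _ hik]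
    exact Finset.sum_eq_zero fun j _ => by grind

variable {E : Type*} [Fintype E] {ι : E → Type*} [∀ e, Fintype (ι e)] {n : ℕ}
  {σ : ∀ e, ι e → Fin n}

lemma sum_transpose_elemL_mul_elemL (σ : ∀ e, ι e → Fin n) :
    ∑ e, (elemL (σ e))ᵀ * elemL (σ e) =
      diagonal fun i => ((∑ e, Finset.card {j | σ e j = i} : ℕ) : ℝ) := by
  simp_rw [transpose_elemL_mul_elemL, Nat.cast_sum]
  exact (map_sum (diagonalAddMonoidHom (Fin n) ℝ) _ _).symm.trans
    (congrArg diagonal (Finset.sum_fn _ _))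

lemma one_le_sum_transpose_elemL_mul_elemL (hcover : ∀ i, ∃ e j, σ e j = i) :
    1 ≤ ∑ e, (elemL (σ e))ᵀ * elemL (σ e) := by
  rw [sum_transpose_elemL_mul_elemL, ← diagonal_one]
  refine diagonal_mono fun i => ?_
  obtain ⟨e, j, hj⟩ := hcover i
  have hfiber : 1 ≤ Finset.card {j | σ e j = i} := Finset.card_pos.2 ⟨j, by simpa using hj⟩
  exact Nat.one_le_cast.2 (hfiber.trans (Finset.single_le_sum_of_canonicallyOrdered
    (f := fun e => Finset.card {j | σ e j = i}) (Finset.mem_univ e)))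

lemma sum_card_fiber_le_card_filter_exists (hinj : ∀ e, Function.Injective (σ e))
    (i : Fin n) [DecidablePred fun e => ∃ j, σ e j = i] :
    ∑ e, Finset.card {j | σ e j = i} ≤ Finset.card {e | ∃ j, σ e j = i} := by
  rw [Finset.card_filter]
  refine Finset.sum_le_sum fun e _ => ?_
  split_ifs with h
  · exact Finset.card_le_one.2 fun j hj k hk => hinj e (by grind)
  · simp_all

lemma sum_transpose_elemL_mul_elemL_le [∀ i, DecidablePred fun e => ∃ j, σ e j = i] {p : ℕ}
    (hinj : ∀ e, Function.Injective (σ e))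
    (hp : ∀ i, Finset.card {e | ∃ j, σ e j = i} ≤ p) :
    ∑ e, (elemL (σ e))ᵀ * elemL (σ e) ≤ (p : ℝ) • 1 := by
  rw [sum_transpose_elemL_mul_elemL, smul_one_eq_diagonal]
  exact diagonal_mono fun i =>
    Nat.cast_le.2 ((sum_card_fiber_le_card_filter_exists hinj i).trans (hp i))

end Connectivity

open scoped MatrixOrder in
theorem assembled_condition_number_bound_general {E : Type*} [Fintype E] [Nonempty E] {n : ℕ}
    {m : E → ℕ} (L : ∀ e, Matrix (Fin (m e + 1)) (Fin (n + 1)) ℝ) {c d : ℝ} (hc : 0 < c)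
    (hcL : c • 1 ≤ ∑ e, (L e)ᵀ * L e) (hLd : ∑ e, (L e)ᵀ * L e ≤ d • 1)
    {Ae : ∀ e, Matrix (Fin (m e + 1)) (Fin (m e + 1)) ℝ} (hAe : ∀ e, (Ae e).PosDef) :
    (∑ e, (L e)ᵀ * Ae e * L e).PosDef ∧ 1 ≤ specCond (∑ e, (L e)ᵀ * Ae e * L e) ∧
      specCond (∑ e, (L e)ᵀ * Ae e * L e) ≤
        (d * Finset.univ.sup' Finset.univ_nonempty fun e => lamMax (Ae e)) /
          (c * Finset.univ.inf' Finset.univ_nonempty fun e => lamMin (Ae e)) := by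
  simp only [← conjTranspose_eq_transpose_of_trivial] at hcL hLd ⊢
  set a := Finset.univ.inf' Finset.univ_nonempty fun e => lamMin (Ae e)
  set b := Finset.univ.sup' Finset.univ_nonempty fun e => lamMax (Ae e)
  have ha : 0 < a := (Finset.lt_inf'_iff _).2 fun e _ => lamMin_pos (hAe e)
  have haA (e : E) : a • 1 ≤ Ae e :=
    (smul_one_le_iff_le_lamMin (hAe e).isHermitian).2 (Finset.inf'_le _ (Finset.mem_univ e))
  have hAb (e : E) : Ae e ≤ b • 1 :=
    (le_smul_one_iff_lamMax_le (hAe e).isHermitian).2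
      (Finset.le_sup' (fun e => lamMax (Ae e)) (Finset.mem_univ e))
  have hb : 0 ≤ b := by
    obtain ⟨e⟩ := ‹Nonempty E›
    have hab : a ≤ b := by simpa using (haA e).trans (hAb e)
    exact ha.le.trans hab
  have hlow := smul_one_le_sum_conjTranspose_mul_mul ha.le haA hcL
  have hup := sum_conjTranspose_mul_mul_le_smul_one hb hAb hLd
  have hpos := posDef_of_smul_one_le (mul_pos hc ha) hlow
  exact ⟨hpos, one_le_specCond hpos,
    specCond_le_div hpos.isHermitian (mul_pos hc ha) hlow hup⟩

/-- **Condition number bound for assembled finite element matrices** (Fried, Corollary 1).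
Let `A = Σ_e L_eᵀ·A_e·L_e` be assembled from symmetric positive definite element matrices
`A_e`, with each `L_e` having distinct standard basis vectors as rows, every global index
occurring in at least one and at most `p_max` elements. Then `A` is symmetric positive
definite and `1 ≤ κ(A) ≤ p_max · (max_e λ_max(A_e))/(min_e λ_min(A_e))`. -/
theorem assembled_condition_number_bound {N m n pmax : ℕ} (hpmax : 0 < pmax)
    (σ : Fin (N+1) → Fin (m+1) → Fin (n+1))
    (hinj : ∀ e, Function.Injective (σ e))
    (hcover : ∀ i : Fin (n+1), ∃ e j, σ e j = i)
    (hp : ∀ i : Fin (n+1), (Finset.univ.filter fun e => ∃ j, σ e j = i).card ≤ pmax)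
    (Ae : Fin (N+1) → Matrix (Fin (m+1)) (Fin (m+1)) ℝ)
    (hAe : ∀ e, (Ae e).PosDef)
    (A : Matrix (Fin (n+1)) (Fin (n+1)) ℝ)
    (hA : A = ∑ e, (elemL (σ e))ᵀ * Ae e * elemL (σ e)) :
    A.PosDef ∧ 1 ≤ specCond A ∧
      specCond A ≤ (pmax : ℝ) *
        (Finset.univ.sup' Finset.univ_nonempty fun e => lamMax (Ae e)) /
        (Finset.univ.inf' Finset.univ_nonempty fun e => lamMin (Ae e)) := by
  subst hA
  simpa using assembled_condition_number_bound_general (fun e => elemL (σ e)) one_pos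
    (by simpa using one_le_sum_transpose_elemL_mul_elemL hcover)
    (sum_transpose_elemL_mul_elemL_le hinj hp) hAe
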